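/- arXiv:0712.1208 — 5 statements merged into one kernel-verified Lean document; each statement's English description precedes it below -/
import Mathlib

section
/- Let f, g : (0,∞) → ℝ be standard-type functions and c > 0 a constant such that g(x) ≥ c·(x−1)²/f(x) for all x > 0. Let D = diag(λ₁,…,λₙ) be a diagonal density matrix with all λᵢ > 0, and let A be a self-adjoint n×n complex matrix with Tr(DA) = 0. Then ∑_{i,j} M_g(λᵢ,λⱼ)·|A_{ij}|² ≥ c · ∑_{i,j} ((λᵢ−λⱼ)²/M_f(λᵢ,λⱼ))·|A_{ij}|²; that is, the quantum g-covariance of A dominates c times the quantum f-Fisher-information form evaluated at the commutator [D,A]. -/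
open scoped BigOperators

noncomputable section

/-- A standard-type function: continuous, non-decreasing and concave on `(0,∞)`,
positive, with `f 1 = 1` and the symmetry `f t = t * f (1/t)`. -/
def StandardType (f : ℝ → ℝ) : Prop :=
  ContinuousOn f (Set.Ioi 0) ∧ MonotoneOn f (Set.Ioi 0) ∧
  ConcaveOn ℝ (Set.Ioi 0) f ∧ (∀ t : ℝ, 0 < t → 0 < f t) ∧
  f 1 = 1 ∧ ∀ t : ℝ, 0 < t → f t = t * f (1 / t)

/-- The mean associated to `f`: `M_f(a,b) = b * f (a/b)`. -/
def Mmean (f : ℝ → ℝ) (a b : ℝ) : ℝ := b * f (a / b)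

-- Both sides are homogeneous of degree one in `(a, b)`, so only the ratio `a / b` matters.
lemma sq_sub_div_Mmean (f : ℝ → ℝ) (a : ℝ) {b : ℝ} (hb : b ≠ 0) :
    (a - b) ^ 2 / Mmean f a b = b * ((a / b - 1) ^ 2 / f (a / b)) := by
  have sq_sub_eq : (a - b) ^ 2 = b ^ 2 * (a / b - 1) ^ 2 := by
    field_simp
  rw [Mmean, sq_sub_eq, mul_div_mul_comm, pow_two, mul_self_div_self]

lemma mul_sq_sub_div_Mmean_le_Mmean {f g : ℝ → ℝ} {c a b : ℝ} (hb : 0 < b)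
    (hfg : c * (a / b - 1) ^ 2 / f (a / b) ≤ g (a / b)) :
    c * ((a - b) ^ 2 / Mmean f a b) ≤ Mmean g a b :=
  calc
    c * ((a - b) ^ 2 / Mmean f a b) = b * (c * (a / b - 1) ^ 2 / f (a / b)) := by
      rw [sq_sub_div_Mmean f a hb.ne', mul_left_comm, mul_div_assoc]
    _ ≤ b * g (a / b) := by gcongr

theorem qCov_ge_c_gamma_commutator_general {ι κ E : Type*} [Fintype ι] [Fintype κ] [Norm E]
    {f g : ℝ → ℝ} {c : ℝ} (_hf : ∀ x, 0 < x → f x ≠ 0)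
    (hfg : ∀ x, 0 < x → c * (x - 1) ^ 2 / f x ≤ g x)
    {lam : ι → ℝ} (hlam : ∀ i, 0 < lam i) {mu : κ → ℝ} (hmu : ∀ j, 0 < mu j)
    (A : Matrix ι κ E) :
    c * ∑ i, ∑ j, (lam i - mu j) ^ 2 / Mmean f (lam i) (mu j) * ‖A i j‖ ^ 2 ≤
      ∑ i, ∑ j, Mmean g (lam i) (mu j) * ‖A i j‖ ^ 2 := by
  simp only [Finset.mul_sum, ← mul_assoc]
  gcongr with i _ j _
  exact mul_sq_sub_div_Mmean_le_Mmean (hmu j) (hfg _ (div_pos (hlam i) (hmu j)))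

theorem qCov_ge_c_gamma_commutator
    {n : ℕ} (f g : ℝ → ℝ) (hf : StandardType f) (hg : StandardType g)
    (c : ℝ) (hc : 0 < c)
    (hfg : ∀ x : ℝ, 0 < x → g x ≥ c * (x - 1) ^ 2 / f x)
    (lam : Fin n → ℝ) (hlam : ∀ i, 0 < lam i) (hsum : ∑ i, lam i = 1)
    (A : Matrix (Fin n) (Fin n) ℂ) (hA : A.IsHermitian)
    (htr : ∑ i, (lam i : ℂ) * A i i = 0) :
    ∑ i, ∑ j, Mmean g (lam i) (lam j) * ‖A i j‖ ^ 2 ≥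
      c * ∑ i, ∑ j, (lam i - lam j) ^ 2 / Mmean f (lam i) (lam j) * ‖A i j‖ ^ 2 :=
  qCov_ge_c_gamma_commutator_general (fun x hx => (hf.2.2.2.1 x hx).ne') hfg hlam hlam A
end
end

section
/- Let f, g : (0,∞) → ℝ be standard-type functions and c > 0 a constant such that g(x) ≥ c·(x−1)²/f(x) for all x > 0. Let D = diag(λ₁,…,λₙ) be a diagonal density matrix with all λᵢ > 0, and let A₁, A₂, …, A_m be self-adjoint n×n complex matrices. Then det([qCov^g_D(Aᵢ,Aⱼ)]_{i,j=1}^m) ≥ det([c·γ^f_D([D,Aᵢ],[D,Aⱼ])]_{i,j=1}^m). -/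
open scoped BigOperators ComplexConjugate

noncomputable section

/-- The quantum `g`-covariance of `A` and `B` with respect to the diagonal density
matrix with eigenvalues `lam`. -/
def qCovC {n : ℕ} (g : ℝ → ℝ) (lam : Fin n → ℝ)
    (A B : Matrix (Fin n) (Fin n) ℂ) : ℂ :=
  (∑ i, ∑ j, (Mmean g (lam i) (lam j) : ℂ) * conj (A i j) * B i j)
    - (∑ i, (lam i : ℂ) * conj (A i i)) * (∑ i, (lam i : ℂ) * B i i)

/-- The quantum `f`-Fisher-information form evaluated at the commutators
`[D,A]`, `[D,B]`, for the diagonal density matrix `D` with eigenvalues `lam`. -/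
def gammaCommC {n : ℕ} (f : ℝ → ℝ) (lam : Fin n → ℝ)
    (A B : Matrix (Fin n) (Fin n) ℂ) : ℂ :=
  ∑ i, ∑ j, (((lam i - lam j) ^ 2 / Mmean f (lam i) (lam j) : ℝ) : ℂ)
      * conj (A i j) * B i j

/-! Real parts of sesquilinear forms are real inner products of entries, so both matrices are
combinations of the Gram matrices `G i j` of the families `k ↦ A k i j`, and everything happens in
the Löwner order. The hypothesis on `f` and `g` bounds the weight of `G i j` in the Fisher
information matrix by its weight `M_g(λᵢ, λⱼ)` in the covariance. The diagonal `G i i` have weight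
`0` in the former and `λᵢ g(1)` in the latter, which leaves room for the subtracted Gram matrix of
the means `∑ᵢ λᵢ A k i i`: Gram matrices are convex in the family, so Jensen's inequality bounds it
by `∑ᵢ λᵢ G i i`. The determinant is monotone on positive semidefinite matrices. -/

section LoewnerOrder

open scoped ComplexOrder MatrixOrder

variable {𝕜 ι κ E : Type*} [RCLike 𝕜]

lemma one_le_det_of_one_le [Fintype ι] [DecidableEq ι] {M : Matrix ι ι 𝕜} (hM : 1 ≤ M) :
    1 ≤ M.det := by
  have hM_herm : M.IsHermitian :=
    (Matrix.nonneg_iff_posSemidef.1 (zero_le_one.trans hM)).isHermitian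
  have one_le_eigenvalues (i : ι) : 1 ≤ hM_herm.eigenvalues i :=
    (CFC.one_le_iff M hM_herm).1 hM _ (hM_herm.eigenvalues_mem_spectrum_real i)
  rw [hM_herm.det_eq_prod_eigenvalues]
  exact_mod_cast Finset.one_le_prod fun i _ ↦ one_le_eigenvalues i

lemma det_le_det_of_nonneg_of_le [Fintype ι] [DecidableEq ι] {M N : Matrix ι ι 𝕜}
    (hM : 0 ≤ M) (hMN : M ≤ N) : M.det ≤ N.det := by
  obtain ⟨C, rfl⟩ := CStarAlgebra.nonneg_iff_eq_star_mul_self.1 hM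
  by_cases hC : IsUnit C.det
  · have inv_mul : C⁻¹ * C = 1 := C.nonsing_inv_mul hC
    have mul_inv : C * C⁻¹ = 1 := C.mul_nonsing_inv hC
    have star_mul_star_inv : star C * star C⁻¹ = 1 := by rw [← star_mul, inv_mul, star_one]
    have star_inv_mul_star : star C⁻¹ * star C = 1 := by rw [← star_mul, mul_inv, star_one]
    have one_le_conj : 1 ≤ star C⁻¹ * N * C⁻¹ :=
      calc (1 : Matrix ι ι 𝕜) = star C⁻¹ * (star C * C) * C⁻¹ := by
            rw [← mul_assoc, star_inv_mul_star, one_mul, mul_inv]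
        _ ≤ star C⁻¹ * N * C⁻¹ := star_left_conjugate_le_conjugate hMN C⁻¹
    calc (star C * C).det ≤ (star C * C).det * (star C⁻¹ * N * C⁻¹).det :=
          le_mul_of_one_le_right (Matrix.nonneg_iff_posSemidef.1 hM).det_nonneg
            (one_le_det_of_one_le one_le_conj)
      _ = (star C * (star C⁻¹ * N * C⁻¹) * C).det := by simp only [Matrix.det_mul]; ring
      _ = N.det := by
          rw [← mul_assoc, ← mul_assoc, star_mul_star_inv, one_mul, mul_assoc, inv_mul, mul_one]
  · have det_eq_zero : (star C * C).det = 0 := by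
      rw [Matrix.det_mul, not_ne_iff.1 (isUnit_iff_ne_zero.not.1 hC), mul_zero]
    exact det_eq_zero.trans_le (Matrix.nonneg_iff_posSemidef.1 (hM.trans hMN)).det_nonneg

variable [Finite ι] [SeminormedAddCommGroup E] [InnerProductSpace ℝ E]

lemma gram_nonneg (v : ι → E) : 0 ≤ Matrix.gram ℝ v :=
  (Matrix.posSemidef_gram ℝ v).nonneg

lemma convexOn_gram :
    ConvexOn ℝ Set.univ (Matrix.gram ℝ : (ι → E) → Matrix ι ι ℝ) := by
  have := Fintype.ofFinite ι
  refine ⟨convex_univ, fun v _ w _ a b ha hb hab ↦ ?_⟩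
  have gap_eq : a • Matrix.gram ℝ v + b • Matrix.gram ℝ w - Matrix.gram ℝ (a • v + b • w) =
      (a * b) • Matrix.gram ℝ (v - w) := by
    obtain rfl : b = 1 - a := by linarith
    ext i j
    simp only [Matrix.sub_apply, Matrix.add_apply, Matrix.smul_apply, Matrix.gram_apply,
      Pi.add_apply, Pi.sub_apply, Pi.smul_apply, smul_eq_mul, inner_add_left, inner_add_right,
      inner_sub_left, inner_sub_right, real_inner_smul_left, real_inner_smul_right]
    ring
  rw [← sub_nonneg, gap_eq]
  exact smul_nonneg (mul_nonneg ha hb) (gram_nonneg _)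

lemma gram_sum_smul_le [Fintype κ] {w : κ → ℝ} (hw : ∀ i, 0 ≤ w i) (hsum : ∑ i, w i ≤ 1)
    (v : κ → ι → E) : Matrix.gram ℝ (∑ i, w i • v i) ≤ ∑ i, w i • Matrix.gram ℝ (v i) := by
  have := Fintype.ofFinite ι
  -- the missing mass `1 - ∑ i, w i` is put on the zero family
  simpa using ConvexOn.map_add_sum_le (𝕜 := ℝ) (E := ι → E) (β := Matrix ι ι ℝ)
    (t := Finset.univ) (p := v) (q := 0) convexOn_gram (fun i _ ↦ hw i)
    (sub_add_cancel 1 (∑ i, w i)) (fun i _ ↦ Set.mem_univ (v i)) (sub_nonneg.2 hsum)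
    (Set.mem_univ _)

end LoewnerOrder

section Mean

variable {f g : ℝ → ℝ} {a b c : ℝ}

lemma Mmean_pos (hf : ∀ x, 0 < x → 0 < f x) (ha : 0 < a) (hb : 0 < b) : 0 < Mmean f a b :=
  mul_pos hb (hf _ (div_pos ha hb))

lemma Mmean_self (ha : a ≠ 0) : Mmean f a a = a * f 1 := by
  rw [Mmean, div_self ha]

lemma mul_sq_sub_div_Mmean_le (hfg : ∀ x, 0 < x → c * (x - 1) ^ 2 / f x ≤ g x)
    (ha : 0 < a) (hb : 0 < b) : c * ((a - b) ^ 2 / Mmean f a b) ≤ Mmean g a b :=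
  calc c * ((a - b) ^ 2 / Mmean f a b) = b * (c * (a / b - 1) ^ 2 / f (a / b)) := by
        rw [Mmean]; field_simp
    _ ≤ b * g (a / b) := mul_le_mul_of_nonneg_left (hfg _ (div_pos ha hb)) hb.le

end Mean

section CovarianceFisher

open scoped MatrixOrder

variable {n : ℕ} {ι : Type*} {f g : ℝ → ℝ} {lam : Fin n → ℝ} {c : ℝ}

lemma of_re_gammaCommC_eq_sum_gram (f : ℝ → ℝ) (lam : Fin n → ℝ)
    (A : ι → Matrix (Fin n) (Fin n) ℂ) :
    (Matrix.of fun k l => (gammaCommC f lam (A k) (A l)).re) =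
      ∑ i, ∑ j, ((lam i - lam j) ^ 2 / Mmean f (lam i) (lam j)) •
        Matrix.gram ℝ fun k => A k i j := by
  ext k l
  simp only [Matrix.of_apply, gammaCommC, Complex.re_sum, mul_assoc, Complex.re_ofReal_mul,
    Matrix.sum_apply, Matrix.smul_apply, Matrix.gram_apply, smul_eq_mul, Complex.inner,
    mul_comm (A l _ _)]

lemma of_re_qCovC_eq_sum_gram_sub (g : ℝ → ℝ) (lam : Fin n → ℝ)
    (A : ι → Matrix (Fin n) (Fin n) ℂ) :
    (Matrix.of fun k l => (qCovC g lam (A k) (A l)).re) =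
      ∑ i, ∑ j, Mmean g (lam i) (lam j) • (Matrix.gram ℝ fun k => A k i j) -
        Matrix.gram ℝ (∑ i, lam i • fun k => A k i i) := by
  ext k l
  simp only [Matrix.of_apply, qCovC, Complex.sub_re, Complex.re_sum, mul_assoc,
    Complex.re_ofReal_mul, Matrix.sub_apply, Matrix.sum_apply, Matrix.smul_apply,
    Matrix.gram_apply, smul_eq_mul, Complex.inner, Finset.sum_apply, Pi.smul_apply,
    Complex.real_smul, map_sum, map_mul, Complex.conj_ofReal, mul_comm (A l _ _),
    mul_comm (∑ i, (lam i : ℂ) * A l i i)]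

lemma of_re_gammaCommC_nonneg [Finite ι] (hf : ∀ x, 0 < x → 0 < f x) (hlam : ∀ i, 0 < lam i)
    (A : ι → Matrix (Fin n) (Fin n) ℂ) :
    0 ≤ Matrix.of fun k l => (gammaCommC f lam (A k) (A l)).re := by
  have := Fintype.ofFinite ι
  rw [of_re_gammaCommC_eq_sum_gram]
  exact Finset.sum_nonneg fun i _ ↦ Finset.sum_nonneg fun j _ ↦ smul_nonneg
    (div_nonneg (sq_nonneg _) (Mmean_pos hf (hlam i) (hlam j)).le) (gram_nonneg _)

lemma smul_of_re_gammaCommC_le_of_re_qCovC [Finite ι] (hg1 : 1 ≤ g 1)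
    (hfg : ∀ x, 0 < x → c * (x - 1) ^ 2 / f x ≤ g x)
    (hlam : ∀ i, 0 < lam i) (hsum : ∑ i, lam i ≤ 1) (A : ι → Matrix (Fin n) (Fin n) ℂ) :
    (c • Matrix.of fun k l => (gammaCommC f lam (A k) (A l)).re) ≤
      Matrix.of fun k l => (qCovC g lam (A k) (A l)).re := by
  have := Fintype.ofFinite ι
  let G (i j : Fin n) : Matrix ι ι ℝ := Matrix.gram ℝ fun k => A k i j
  let γ (i j : Fin n) : ℝ := (lam i - lam j) ^ 2 / Mmean f (lam i) (lam j)
  have weight_le (i j : Fin n) :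
      c * γ i j + (if i = j then lam i else 0) ≤ Mmean g (lam i) (lam j) := by
    split_ifs with hij
    · subst hij
      simpa [γ, Mmean_self (hlam i).ne'] using le_mul_of_one_le_right (hlam i).le hg1
    · simpa using mul_sq_sub_div_Mmean_le hfg (hlam i) (hlam j)
  rw [of_re_gammaCommC_eq_sum_gram, of_re_qCovC_eq_sum_gram_sub, le_sub_iff_add_le]
  calc c • ∑ i, ∑ j, γ i j • G i j + Matrix.gram ℝ (∑ i, lam i • fun k => A k i i)
      ≤ c • ∑ i, ∑ j, γ i j • G i j + ∑ i, lam i • G i i :=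
        add_le_add_right (gram_sum_smul_le (fun i ↦ (hlam i).le) hsum _) _
    _ = ∑ i, ∑ j, (c * γ i j + if i = j then lam i else 0) • G i j := by
        simp only [Finset.smul_sum, smul_smul, add_smul, ite_smul, zero_smul,
          Finset.sum_add_distrib, Finset.sum_ite_eq, Finset.mem_univ, if_true]
    _ ≤ ∑ i, ∑ j, Mmean g (lam i) (lam j) • G i j :=
        Finset.sum_le_sum fun i _ ↦ Finset.sum_le_sum fun j _ ↦
          smul_le_smul_of_nonneg_right (weight_le i j) (gram_nonneg _)

theorem det_qCov_ge_det_gammaComm_general [Fintype ι] [DecidableEq ι]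
    (hf : ∀ x, 0 < x → 0 < f x) (hg1 : 1 ≤ g 1) (hc : 0 ≤ c)
    (hfg : ∀ x, 0 < x → c * (x - 1) ^ 2 / f x ≤ g x)
    (hlam : ∀ i, 0 < lam i) (hsum : ∑ i, lam i ≤ 1) (A : ι → Matrix (Fin n) (Fin n) ℂ) :
    Matrix.det (Matrix.of fun i j => (qCovC g lam (A i) (A j)).re) ≥
      Matrix.det (Matrix.of fun i j => c * (gammaCommC f lam (A i) (A j)).re) :=
  det_le_det_of_nonneg_of_le (smul_nonneg hc (of_re_gammaCommC_nonneg hf hlam A))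
    (smul_of_re_gammaCommC_le_of_re_qCovC hg1 hfg hlam hsum A)

end CovarianceFisher

theorem det_qCov_ge_det_gammaComm
    {n m : ℕ} (f g : ℝ → ℝ) (hf : StandardType f) (hg : StandardType g)
    (c : ℝ) (hc : 0 < c)
    (hfg : ∀ x : ℝ, 0 < x → g x ≥ c * (x - 1) ^ 2 / f x)
    (lam : Fin n → ℝ) (hlam : ∀ i, 0 < lam i) (hsum : ∑ i, lam i = 1)
    (A : Fin m → Matrix (Fin n) (Fin n) ℂ) (hA : ∀ k, (A k).IsHermitian) :
    Matrix.det (Matrix.of fun i j => (qCovC g lam (A i) (A j)).re) ≥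
      Matrix.det (Matrix.of fun i j => c * (gammaCommC f lam (A i) (A j)).re) :=
  have ⟨_, _, _, hfpos, _, _⟩ := hf
  have ⟨_, _, _, _, hg1, _⟩ := hg
  det_qCov_ge_det_gammaComm_general hfpos hg1.ge hc.le hfg hlam hsum.le A
end
end

section
/- Let f : (0,∞) → ℝ be a standard-type function and set f(0) := lim_{t→0+} f(t). Then f(x) ≥ f(0)·|x−1| for every x > 0. -/
open scoped BigOperators

noncomputable section

/-! Monotonicity gives `f ≥ f(0)`, and the symmetry upgrades this to
`f x = x * f (1 / x) ≥ f(0) * x`, so `f x ≥ f(0) * max 1 x ≥ f(0) * |x - 1|`. The last step needs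
`f(0) ≥ 0`, which is automatic: for `s < 1` monotonicity and symmetry give
`s * f (1 / s) = f s ≤ f (1 / s)`, so `f (1 / s) ≥ 0`. -/

theorem le_of_monotoneOn_of_tendsto_nhdsGT {α β : Type*}
    [LinearOrder α] [DenselyOrdered α] [TopologicalSpace α] [OrderTopology α]
    [Preorder β] [TopologicalSpace β] [ClosedIicTopology β]
    {f : α → β} {a x : α} {l : β} (hf : MonotoneOn f (Set.Ioi a))
    (hl : Filter.Tendsto f (nhdsWithin a (Set.Ioi a)) (nhds l)) (hx : a < x) : l ≤ f x := by
  have : (nhdsWithin a (Set.Ioi a)).NeBot := nhdsGT_neBot_of_exists_gt ⟨x, hx⟩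
  refine le_of_tendsto hl ?_
  filter_upwards [Ioo_mem_nhdsGT hx] with t ht
  exact hf ht.1 hx ht.2.le

section Symmetric

variable {K : Type*} [Field K] [LinearOrder K] [IsStrictOrderedRing K] {f : K → K} {c x : K}

theorem nonneg_of_monotoneOn_of_symm (hmono : MonotoneOn f (Set.Ioi 0))
    (hsymm : ∀ t, 0 < t → f t = t * f (1 / t)) (hx : 0 < x) : 0 ≤ f x := by
  obtain ⟨s, hs_pos, hs_lt⟩ := exists_between (lt_min hx one_pos)
  obtain ⟨hsx, hs_one⟩ := lt_min_iff.mp hs_lt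
  have hs_inv : s ≤ 1 / s := hs_one.le.trans (one_le_one_div hs_pos hs_one.le)
  have hle : s * f (1 / s) ≤ f (1 / s) :=
    hsymm s hs_pos ▸ hmono hs_pos (one_div_pos.mpr hs_pos) hs_inv
  have hinv_nonneg : 0 ≤ f (1 / s) := by
    by_contra! hneg
    exact hle.not_gt (lt_mul_of_lt_one_left hneg hs_one)
  calc
    0 ≤ s * f (1 / s) := mul_nonneg hs_pos.le hinv_nonneg
    _ = f s := (hsymm s hs_pos).symm
    _ ≤ f x := hmono hs_pos hx hsx.le

theorem mul_max_one_le_of_symm (hc : ∀ t, 0 < t → c ≤ f t)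
    (hsymm : ∀ t, 0 < t → f t = t * f (1 / t)) (hx : 0 < x) : c * max 1 x ≤ f x := by
  rcases max_choice 1 x with hmax | hmax <;> rw [hmax]
  · simpa only [mul_one] using hc x hx
  · calc
      c * x = x * c := mul_comm c x
      _ ≤ x * f (1 / x) := mul_le_mul_of_nonneg_left (hc _ (one_div_pos.mpr hx)) hx.le
      _ = f x := (hsymm x hx).symm

theorem standard_ge_f0_mul_abs_general [TopologicalSpace K] [OrderTopology K] {f0 : K}
    (hmono : MonotoneOn f (Set.Ioi 0)) (hsymm : ∀ t, 0 < t → f t = t * f (1 / t))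
    (hf0 : Filter.Tendsto f (nhdsWithin 0 (Set.Ioi 0)) (nhds f0)) (hx : 0 < x) :
    f0 * |x - 1| ≤ f x := by
  have hf0_nonneg : 0 ≤ f0 := by
    refine ge_of_tendsto hf0 ?_
    filter_upwards [self_mem_nhdsWithin] with t ht
    exact nonneg_of_monotoneOn_of_symm hmono hsymm ht
  have habs : |x - 1| ≤ max 1 x :=
    abs_sub_le_of_nonneg_of_le hx.le (le_max_right 1 x) zero_le_one (le_max_left 1 x)
  calc
    f0 * |x - 1| ≤ f0 * max 1 x := mul_le_mul_of_nonneg_left habs hf0_nonneg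
    _ ≤ f x := mul_max_one_le_of_symm
      (fun _ ht ↦ le_of_monotoneOn_of_tendsto_nhdsGT hmono hf0 ht) hsymm hx

end Symmetric

theorem standard_ge_f0_mul_abs
    (f : ℝ → ℝ) (hf : StandardType f) (f0 : ℝ)
    (hf0 : Filter.Tendsto f (nhdsWithin 0 (Set.Ioi 0)) (nhds f0)) :
    ∀ x : ℝ, 0 < x → f x ≥ f0 * |x - 1| := by
  obtain ⟨-, hmono, -, -, -, hsymm⟩ := hf
  exact fun _ hx ↦ standard_ge_f0_mul_abs_general hmono hsymm hf0 hx
end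
end

section
/- Let f, g : (0,∞) → ℝ be standard-type functions and set f(0) := lim_{t→0+} f(t) and g(0) := lim_{t→0+} g(t). Then f(x)·g(x) ≥ f(0)·g(0)·(x−1)² for every x > 0. -/
/-!
A monotone `f` lies above its limit `f0` at `0+`, so `f x ≥ f0`; applying this at `1 / x`, the
symmetry `f x = x * f (1 / x)` upgrades it to `f x ≥ x * f0`. Hence `f x ≥ f0 * max 1 x`, and
`max 1 x ≥ |x - 1|`. Multiplying these bounds for `f` and `g` gives the square.

For the signs, `f 1 ≥ f (1 / 2) = f 2 / 2 ≥ f 1 / 2` forces `f 1 ≥ 0`; monotonicity spreads this to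
`[1,∞)` and the symmetry to `(0,1]`.
-/

open scoped BigOperators

noncomputable section

open Filter Set Topology

theorem le_of_monotoneOn_Ioi_of_tendsto_nhdsGT {α β : Type*}
    [LinearOrder α] [TopologicalSpace α] [OrderTopology α] [DenselyOrdered α]
    [Preorder β] [TopologicalSpace β] [ClosedIicTopology β]
    {f : α → β} {a x : α} {b : β} (hf : MonotoneOn f (Ioi a)) (hb : Tendsto f (𝓝[>] a) (𝓝 b))
    (hx : a < x) : b ≤ f x := by
  have : (𝓝[>] a).NeBot := nhdsGT_neBot_of_exists_gt ⟨x, hx⟩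
  refine le_of_tendsto hb ?_
  filter_upwards [Ioo_mem_nhdsGT hx] with t ht
  exact hf ht.1 hx ht.2.le

section OrderedField

variable {K : Type*} [Field K] [LinearOrder K]

/-- Invariance on the positive half-line under the Kubo–Ando transpose `f ↦ (t ↦ t * f (1 / t))`,
the condition under which the operator mean represented by `f` is symmetric. Values of `f` outside
the positive half-line are unconstrained. -/
def TransposeInvariant (f : K → K) : Prop :=
  ∀ t : K, 0 < t → f t = t * f (1 / t)

variable [IsStrictOrderedRing K]

theorem abs_sub_one_le_max_one {x : K} (hx : 0 ≤ x) : |x - 1| ≤ max 1 x :=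
  abs_sub_le_of_nonneg_of_le hx (le_max_right 1 x) zero_le_one (le_max_left 1 x)

namespace TransposeInvariant

variable {f : K → K}

theorem map_one_nonneg (hf : TransposeInvariant f) (hmono : MonotoneOn f (Ioi 0)) :
    0 ≤ f 1 := by
  have h_two : f 1 ≤ f 2 := hmono one_pos two_pos one_le_two
  have h_half : 1 / 2 * f 2 ≤ f 1 := by
    have h : f (1 / 2) = 1 / 2 * f 2 := by simpa using hf (1 / 2) one_half_pos
    exact h ▸ hmono one_half_pos one_pos one_half_lt_one.le
  linarith

theorem nonneg (hf : TransposeInvariant f) (hmono : MonotoneOn f (Ioi 0)) {x : K} (hx : 0 < x) :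
    0 ≤ f x := by
  have nonneg_of_one_le {t : K} (ht : 1 ≤ t) : 0 ≤ f t :=
    (hf.map_one_nonneg hmono).trans (hmono one_pos (one_pos.trans_le ht) ht)
  rcases le_total 1 x with h | h
  · exact nonneg_of_one_le h
  · rw [hf x hx]
    exact mul_nonneg hx.le (nonneg_of_one_le (one_le_one_div hx h))

variable [TopologicalSpace K] [OrderTopology K] {f0 : K}

theorem limit_nonneg (hf : TransposeInvariant f) (hmono : MonotoneOn f (Ioi 0))
    (hf0 : Tendsto f (𝓝[>] 0) (𝓝 f0)) : 0 ≤ f0 :=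
  ge_of_tendsto hf0 (eventually_mem_nhdsWithin.mono fun _ ht => hf.nonneg hmono ht)

theorem limit_mul_max_one_le (hf : TransposeInvariant f) (hmono : MonotoneOn f (Ioi 0))
    (hf0 : Tendsto f (𝓝[>] 0) (𝓝 f0)) {x : K} (hx : 0 < x) : f0 * max 1 x ≤ f x := by
  have limit_le {t : K} (ht : 0 < t) : f0 ≤ f t :=
    le_of_monotoneOn_Ioi_of_tendsto_nhdsGT hmono hf0 ht
  have mul_limit_le : x * f0 ≤ f x := by
    rw [hf x hx]
    exact mul_le_mul_of_nonneg_left (limit_le (one_div_pos.2 hx)) hx.le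
  rcases max_choice 1 x with h | h
  · simpa only [h, mul_one] using limit_le hx
  · simpa only [h, mul_comm] using mul_limit_le

theorem limit_mul_abs_sub_one_le (hf : TransposeInvariant f) (hmono : MonotoneOn f (Ioi 0))
    (hf0 : Tendsto f (𝓝[>] 0) (𝓝 f0)) {x : K} (hx : 0 < x) : f0 * |x - 1| ≤ f x :=
  (mul_le_mul_of_nonneg_left (abs_sub_one_le_max_one hx.le) (hf.limit_nonneg hmono hf0)).trans
    (hf.limit_mul_max_one_le hmono hf0 hx)

end TransposeInvariant

theorem mul_standard_ge_f0_g0_sq_general [TopologicalSpace K] [OrderTopology K]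
    {f g : K → K} (hf : TransposeInvariant f) (hg : TransposeInvariant g)
    (hf_mono : MonotoneOn f (Ioi 0)) (hg_mono : MonotoneOn g (Ioi 0)) {f0 g0 : K}
    (hf0 : Tendsto f (𝓝[>] 0) (𝓝 f0)) (hg0 : Tendsto g (𝓝[>] 0) (𝓝 g0)) {x : K} (hx : 0 < x) :
    f0 * g0 * (x - 1) ^ 2 ≤ f x * g x :=
  calc
    f0 * g0 * (x - 1) ^ 2 = (f0 * |x - 1|) * (g0 * |x - 1|) := by rw [← sq_abs]; ring
    _ ≤ f x * g x :=
      mul_le_mul (hf.limit_mul_abs_sub_one_le hf_mono hf0 hx)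
        (hg.limit_mul_abs_sub_one_le hg_mono hg0 hx)
        (mul_nonneg (hg.limit_nonneg hg_mono hg0) (abs_nonneg _)) (hf.nonneg hf_mono hx)

end OrderedField

namespace StandardType

variable {f : ℝ → ℝ}

theorem monotoneOn (hf : StandardType f) : MonotoneOn f (Ioi 0) := hf.2.1

theorem transposeInvariant (hf : StandardType f) : TransposeInvariant f := hf.2.2.2.2.2

end StandardType

theorem mul_standard_ge_f0_g0_sq
    (f g : ℝ → ℝ) (hf : StandardType f) (hg : StandardType g)
    (f0 g0 : ℝ)
    (hf0 : Filter.Tendsto f (nhdsWithin 0 (Set.Ioi 0)) (nhds f0))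
    (hg0 : Filter.Tendsto g (nhdsWithin 0 (Set.Ioi 0)) (nhds g0)) :
    ∀ x : ℝ, 0 < x → f x * g x ≥ f0 * g0 * (x - 1) ^ 2 :=
  fun _ hx => mul_standard_ge_f0_g0_sq_general hf.transposeInvariant hg.transposeInvariant
    hf.monotoneOn hg.monotoneOn hf0 hg0 hx
end
end

section
/- Let f, g : (0,∞) → ℝ be standard-type functions and c > 0 a constant such that f(x)·g(x) ≥ c·(x−1)² for all x > 0. Then the strict inequality f(x)·g(x) > c·(x−1)² holds for all x > 0. -/
open scoped BigOperators

noncomputable section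

/-!
Prolong the segment from `1` to `x` to a point `y` of `(0,∞)` and write `x = a + b * y` with
`a + b = 1` and `0 < a, b`. Concavity gives `f x ≥ a * f 1 + b * f y`, and likewise for `g`; the
product of these bounds exceeds `b ^ 2 * (f y * g y)` because `f 1` and `g 1` are positive, while
`b ^ 2 * (c * (y - 1) ^ 2) = c * (x - 1) ^ 2`. So equality at `x` would violate the assumed
inequality at `y`.
-/

section Concave

open scoped Topology

variable {𝕜 E : Type*} [Field 𝕜] [LinearOrder 𝕜] [IsStrictOrderedRing 𝕜]
  [AddCommGroup E] [Module 𝕜 E] {s : Set E} {f g : E → 𝕜} {x₀ x y : E}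

theorem sq_mul_mul_lt_mul_of_concaveOn (hf : ConcaveOn 𝕜 s f) (hg : ConcaveOn 𝕜 s g)
    (hx : x ∈ s) (hy : y ∈ s) (hfx : 0 < f x) (hgx : 0 < g x) (hfy : 0 ≤ f y) (hgy : 0 ≤ g y)
    {a b : 𝕜} (ha : 0 < a) (hb : 0 ≤ b) (hab : a + b = 1) :
    b ^ 2 * (f y * g y) < f (a • x + b • y) * g (a • x + b • y) := by
  have hf_le : a * f x + b * f y ≤ f (a • x + b • y) := hf.2 hx hy ha.le hb hab
  have hg_le : a * g x + b * g y ≤ g (a • x + b • y) := hg.2 hx hy ha.le hb hab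
  calc b ^ 2 * (f y * g y)
      = (b * f y) * (b * g y) := by ring
    _ < (a * f x + b * f y) * (a * g x + b * g y) :=
        mul_lt_mul'' (lt_add_of_pos_left _ (by positivity)) (lt_add_of_pos_left _ (by positivity))
          (by positivity) (by positivity)
    _ ≤ f (a • x + b • y) * g (a • x + b • y) :=
        mul_le_mul hf_le hg_le (by positivity) (le_trans (by positivity) hf_le)

variable [TopologicalSpace 𝕜] [OrderTopology 𝕜]
  [TopologicalSpace E] [IsTopologicalAddGroup E] [ContinuousSMul 𝕜 E]

variable (𝕜) in
theorem exists_mem_openSegment_of_mem_interior (x₀ : E) (hx : x ∈ interior s) :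
    ∃ y ∈ s, x ∈ openSegment 𝕜 x₀ y := by
  have hmem : ∀ᶠ t in 𝓝[>] (1 : 𝕜), AffineMap.homothety x₀ t x ∈ s :=
    (eventually_homothety_mem_of_mem_interior 𝕜 x₀ hx).filter_mono nhdsWithin_le_nhds
  obtain ⟨t, hts, ht : 1 < t⟩ := (hmem.and self_mem_nhdsWithin).exists
  refine ⟨AffineMap.homothety x₀ t x, hts, ?_⟩
  have hx_eq : AffineMap.lineMap x₀ (AffineMap.homothety x₀ t x) t⁻¹ = x := by
    rw [← AffineMap.homothety_eq_lineMap, ← AffineMap.homothety_mul_apply,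
      inv_mul_cancel₀ (by positivity), AffineMap.homothety_one, AffineMap.id_apply]
  have hx_mem := lineMap_mem_openSegment 𝕜 x₀ (AffineMap.homothety x₀ t x)
    (t := t⁻¹) ⟨by positivity, inv_lt_one_of_one_lt₀ ht⟩
  rwa [hx_eq] at hx_mem

theorem mul_standard_gt_of_ge_general (hf : ConcaveOn 𝕜 s f) (hg : ConcaveOn 𝕜 s g)
    (hf_nonneg : ∀ x ∈ s, 0 ≤ f x) (hg_nonneg : ∀ x ∈ s, 0 ≤ g x)
    (hx₀ : x₀ ∈ s) (hfx₀ : 0 < f x₀) (hgx₀ : 0 < g x₀)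
    {q : E → 𝕜} (hq : ∀ t : 𝕜, 0 < t → ∀ v, q (t • v) = t ^ 2 * q v)
    (hfg : ∀ x ∈ s, q (x - x₀) ≤ f x * g x) (hx : x ∈ interior s) :
    q (x - x₀) < f x * g x := by
  obtain ⟨y, hy, a, b, ha, hb, hab, rfl⟩ := exists_mem_openSegment_of_mem_interior 𝕜 x₀ hx
  have hsub : a • x₀ + b • y - x₀ = b • (y - x₀) := by
    rw [eq_sub_of_add_eq hab]
    module
  calc q (a • x₀ + b • y - x₀)
      = b ^ 2 * q (y - x₀) := by rw [hsub, hq b hb]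
    _ ≤ b ^ 2 * (f y * g y) := by gcongr; exact hfg y hy
    _ < f (a • x₀ + b • y) * g (a • x₀ + b • y) :=
        sq_mul_mul_lt_mul_of_concaveOn hf hg hx₀ hy hfx₀ hgx₀
          (hf_nonneg y hy) (hg_nonneg y hy) ha hb.le hab

end Concave

theorem mul_standard_gt_of_ge
    (f g : ℝ → ℝ) (hf : StandardType f) (hg : StandardType g)
    (c : ℝ) (hc : 0 < c)
    (hfg : ∀ x : ℝ, 0 < x → f x * g x ≥ c * (x - 1) ^ 2) :
    ∀ x : ℝ, 0 < x → f x * g x > c * (x - 1) ^ 2 := by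
  obtain ⟨-, -, hf_concave, hf_pos, -, -⟩ := hf
  obtain ⟨-, -, hg_concave, hg_pos, -, -⟩ := hg
  exact fun x hx ↦ mul_standard_gt_of_ge_general (q := fun v ↦ c * v ^ 2) hf_concave hg_concave
    (fun y hy ↦ (hf_pos y hy).le) (fun y hy ↦ (hg_pos y hy).le) (Set.mem_Ioi.2 one_pos)
    (hf_pos 1 one_pos) (hg_pos 1 one_pos) (fun t _ v ↦ by rw [smul_eq_mul]; ring) hfg
    (by rwa [isOpen_Ioi.interior_eq])
end
end
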